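/- arXiv:1505.00433 — 3 statements merged into one kernel-verified Lean document; each statement's English description precedes it below -/
import Mathlib

section
/- For every n ≥ 0 and all i_1, i_2, i_3 ∈ {0,1} such that the word i_1^{(n)} i_2^{(n)} i_3^{(n)} is a factor of ω, one has φ(i_1^{(n)} i_2^{(n)} i_3^{(n)}) = 1/(6·2^n). -/
/-!
Let `σ` be the substitution `0 ↦ 01`, `1 ↦ 10`, so that `i⁽ⁿ⁾ = σⁿ(i)` and it suffices to show
`φ (σ v) = φ v / 2` for every factor `v` of length at least `3`. If `v` has at least two letters, a
word `j σ(v)` occurs in the one-sided sequence only at odd positions: an occurrence at `2 q` would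
force equal letters at `q`, `q + 1` and `q + 2`. Hence `j σ(v)` is a factor iff `(1 - j) v` is, and
a factor `i j σ(v)` has `i = 1 - j`. Of the two letters by which `σ(i v)` extends `σ(v)`, the outer
one is therefore forced, while the inner one is forced exactly when `i` is forced in `i v`. This
gives the claim by induction on the length of `v`, starting from `φ (σ(bc))`, which is `1/12` if
`b = c` and `1/6` otherwise.
-/

/-- One-sided Thue–Morse sequence: parity of the binary digit sum. -/
def tm (n : ℕ) : ℕ := (Nat.digits 2 n).sum % 2

/-- Two-sided Thue–Morse sequence `ω : ℤ → {0,1}`. -/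
def tmZ (n : ℤ) : ℕ := if 0 ≤ n then tm n.toNat else tm (-n - 1).toNat

/-- The block `ω_[m, m+k-1]` of the two-sided Thue–Morse sequence. -/
def tmBlock (m : ℤ) (k : ℕ) : List ℕ := (List.range k).map fun j => tmZ (m + j)

/-- A (nonempty) word is a factor of the two-sided Thue–Morse sequence. -/
def IsFactor (α : List ℕ) : Prop := α ≠ [] ∧ ∃ m : ℤ, α = tmBlock m α.length

/-- The words `i⁽ⁿ⁾`: `blk i 0 = [i]`, `blk i (n+1) = blk i n ++ blk (1-i) n`. -/
def blk : ℕ → ℕ → List ℕ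
  | i, 0 => [i]
  | i, n + 1 => blk i n ++ blk (1 - i) n

/-- The word `α` occurs in the one-sided sequence `u` at position `m`. -/
def OccursAt {A : Type*} (u : ℕ → A) : ℕ → List A → Prop
  | _, [] => True
  | m, a :: l => u m = a ∧ OccursAt u (m + 1) l

/-- The Thue–Morse substitution `σ : 0 ↦ 01, 1 ↦ 10`. -/
def tmSubst (v : List ℕ) : List ℕ := v.flatMap fun i => [i, 1 - i]

/-- The recursion defining the function `φ` on the factors of length at least `3`; the values of
`φ` on all other words are arbitrary. -/
structure IsFactorWeight (φ : List ℕ → ℝ) : Prop where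
  apply_of_length_eq_three : ∀ α : List ℕ, IsFactor α → α.length = 3 → φ α = 1 / 6
  apply_cons_of_not_isFactor : ∀ (i : ℕ) (α : List ℕ), IsFactor (i :: α) → 3 ≤ α.length →
    ¬ IsFactor ((1 - i) :: α) → φ (i :: α) = φ α
  apply_cons_of_isFactor : ∀ (i : ℕ) (α : List ℕ), IsFactor (i :: α) → 3 ≤ α.length →
    IsFactor ((1 - i) :: α) → φ (i :: α) = φ α / 2

theorem tm_lt_two (n : ℕ) : tm n < 2 := Nat.mod_lt _ two_pos

theorem tm_two_mul_add (n : ℕ) {r : ℕ} (hr : r < 2) : tm (2 * n + r) = (tm n + r) % 2 := by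
  by_cases h : r ≠ 0 ∨ n ≠ 0
  · unfold tm
    rw [add_comm (2 * n), Nat.digits_add 2 one_lt_two r n hr h, List.sum_cons, Nat.mod_add_mod,
      add_comm]
  · obtain ⟨rfl, rfl⟩ : r = 0 ∧ n = 0 := by omega
    rfl

theorem tm_two_mul (n : ℕ) : tm (2 * n) = tm n :=
  (tm_two_mul_add n two_pos).trans (Nat.mod_eq_of_lt (tm_lt_two n))

theorem tm_two_mul_add_one (n : ℕ) : tm (2 * n + 1) = 1 - tm n := by
  have := tm_two_mul_add n one_lt_two
  have := tm_lt_two n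
  omega

theorem tm_four_mul_add (n : ℕ) {r : ℕ} (hr : r < 4) :
    tm (4 * n + r) = (tm n + tm r) % 2 := by
  obtain ⟨s, t, hs, ht, rfl⟩ : ∃ s t, s < 2 ∧ t < 2 ∧ r = 2 * s + t :=
    ⟨r / 2, r % 2, by omega, by omega, by omega⟩
  have tm_s : tm s = s := by interval_cases s <;> simp [tm]
  rw [show 4 * n + (2 * s + t) = 2 * (2 * n + s) + t by ring, tm_two_mul_add _ ht,
    tm_two_mul_add n hs, tm_two_mul_add s ht, tm_s]
  omega

theorem tmZ_four_mul_add (q : ℤ) {r : ℕ} (hr : r < 4) :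
    tmZ (4 * q + r) = (tmZ q + tm r) % 2 := by
  unfold tmZ
  by_cases hq : 0 ≤ q
  · rw [if_pos hq, if_pos (by omega), show (4 * q + r).toNat = 4 * q.toNat + r by omega,
      tm_four_mul_add _ hr]
  · have tm_three_sub : tm (3 - r) = tm r := by interval_cases r <;> simp [tm]
    rw [if_neg hq, if_neg (by omega),
      show (-(4 * q + r) - 1).toNat = 4 * (-q - 1).toNat + (3 - r) by omega,
      tm_four_mul_add _ (by omega), tm_three_sub]

/- Both `ω` and the one-sided sequence are fixed by `σ²`, and the letters `tm 5 = tm 6 = 0` agree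
with `ω` at `-1` and `0`. -/
theorem tmZ_eq_tm (k : ℕ) {m : ℤ} (hm : -4 ^ k ≤ m) (hm' : m < 4 ^ k) :
    tmZ m = tm (6 * 4 ^ k + m).toNat := by
  induction k generalizing m with
  | zero =>
    obtain rfl | rfl : m = -1 ∨ m = 0 := by simp only [pow_zero] at hm hm'; omega
    all_goals simp [tmZ, tm]
  | succ k ih =>
    rw [pow_succ] at *
    obtain ⟨q, r, hr, rfl⟩ : ∃ (q : ℤ) (r : ℕ), r < 4 ∧ m = 4 * q + r :=
      ⟨m / 4, (m % 4).toNat, by omega, by omega⟩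
    have hq : -4 ^ k ≤ q := by omega
    rw [tmZ_four_mul_add q hr, ih hq (by omega),
      show (6 * (4 ^ k * 4) + (4 * q + (r : ℤ))).toNat = 4 * (6 * 4 ^ k + q).toNat + r by omega,
      tm_four_mul_add _ hr]

theorem tm_no_cube {m : ℕ} (h : tm m = tm (m + 1)) : tm (m + 1) ≠ tm (m + 2) := by
  intro h'
  rcases m.even_or_odd' with ⟨q, rfl | rfl⟩
  · have := tm_two_mul q
    have := tm_two_mul_add_one q
    have := tm_lt_two q
    omega
  · have := tm_two_mul (q + 1)
    have := tm_two_mul_add_one (q + 1)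
    have := tm_lt_two (q + 1)
    simp only [mul_add, add_assoc, Nat.reduceMul, Nat.reduceAdd] at *
    omega

theorem occursAt_iff_eq_map_range {A : Type*} {u : ℕ → A} {m : ℕ} {α : List A} :
    OccursAt u m α ↔ α = (List.range α.length).map fun j => u (m + j) := by
  induction α generalizing m with
  | nil => simp [OccursAt]
  | cons a l ih =>
    have hshift : (fun j => u (m + j)) ∘ Nat.succ = fun j => u (m + 1 + j) := by
      funext j
      simp only [Function.comp_apply, Nat.succ_eq_add_one, add_assoc, add_comm 1]
    simp only [OccursAt, ih, List.length_cons, List.range_succ_eq_map, List.map_cons, List.map_map,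
      List.cons.injEq, hshift, add_zero, eq_comm (a := a)]

/- The index in `tmBlock` ranges over `ℤ`: elaboration coerces the list `List.range k` rather than
its entries. -/
theorem tmBlock_eq_map_range (m : ℤ) (k : ℕ) :
    tmBlock m k = (List.range k).map fun j : ℕ => tmZ (m + (j : ℤ)) := by
  simp [tmBlock, List.map_eq_flatMap, List.flatMap_assoc]

theorem isFactor_iff_occursAt {α : List ℕ} :
    IsFactor α ↔ α ≠ [] ∧ ∃ m, OccursAt tm m α := by
  refine and_congr_right fun _ => ⟨fun ⟨m, hm⟩ => ?_, fun ⟨m, hm⟩ => ⟨m, ?_⟩⟩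
  · obtain ⟨k, hk⟩ : ∃ k : ℕ, m.natAbs + α.length < 4 ^ k := ⟨_, Nat.lt_pow_self (by norm_num)⟩
    have hk' : (m.natAbs : ℤ) + α.length < 4 ^ k := by exact_mod_cast hk
    refine ⟨(6 * 4 ^ k + m).toNat, occursAt_iff_eq_map_range.2 ?_⟩
    refine (hm.trans (tmBlock_eq_map_range _ _)).trans (List.map_congr_left fun j hj => ?_)
    rw [List.mem_range] at hj
    rw [tmZ_eq_tm k (by omega) (by omega)]
    congr 1
    omega
  · rw [tmBlock_eq_map_range]
    refine (occursAt_iff_eq_map_range.1 hm).trans (List.map_congr_left fun j _ => ?_)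
    rw [tmZ, if_pos (by omega)]
    rfl

theorem isFactor_cons_iff_occursAt {i : ℕ} {α : List ℕ} :
    IsFactor (i :: α) ↔ ∃ m, OccursAt tm m (i :: α) := by
  simp only [isFactor_iff_occursAt, ne_eq, reduceCtorEq, not_false_eq_true, true_and]

theorem IsFactor.of_cons {i j : ℕ} {α : List ℕ} (h : IsFactor (i :: j :: α)) :
    IsFactor (j :: α) := by
  obtain ⟨m, _, hm⟩ := isFactor_cons_iff_occursAt.1 h
  exact isFactor_cons_iff_occursAt.2 ⟨m + 1, hm⟩

theorem IsFactor.head_lt_two {i : ℕ} {α : List ℕ} (h : IsFactor (i :: α)) : i < 2 := by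
  obtain ⟨m, rfl, _⟩ := isFactor_cons_iff_occursAt.1 h
  exact tm_lt_two m

theorem not_isFactor_cube (a : ℕ) (α : List ℕ) : ¬ IsFactor (a :: a :: a :: α) := by
  intro h
  obtain ⟨m, h₀, h₁, h₂, _⟩ := isFactor_cons_iff_occursAt.1 h
  exact tm_no_cube (h₀.trans h₁.symm) (h₁.trans h₂.symm)

theorem isFactor_cons_pair_of_ne {i b c : ℕ} (hi : i < 2) (hb : b < 2) (hc : c < 2)
    (hbc : b ≠ c) : IsFactor [i, b, c] := by
  rw [isFactor_cons_iff_occursAt]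
  interval_cases i <;> interval_cases b <;> interval_cases c <;> try contradiction
  · exact ⟨5, by simp [OccursAt, tm]⟩
  · exact ⟨3, by simp [OccursAt, tm]⟩
  · exact ⟨2, by simp [OccursAt, tm]⟩
  · exact ⟨1, by simp [OccursAt, tm]⟩

theorem isFactor_square_append_pair {b : ℕ} (hb : b < 2) : IsFactor [1 - b, 1 - b, b, 1 - b] := by
  rw [isFactor_cons_iff_occursAt]
  interval_cases b
  · exact ⟨1, by simp [OccursAt, tm]⟩
  · exact ⟨9, by simp [OccursAt, tm]⟩

@[simp]
theorem tmSubst_cons (i : ℕ) (v : List ℕ) : tmSubst (i :: v) = i :: (1 - i) :: tmSubst v := rfl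

theorem tmSubst_append (v w : List ℕ) : tmSubst (v ++ w) = tmSubst v ++ tmSubst w :=
  List.flatMap_append

theorem length_tmSubst (v : List ℕ) : (tmSubst v).length = 2 * v.length := by
  simp [tmSubst, mul_comm]

theorem iterate_tmSubst_append (n : ℕ) (v w : List ℕ) :
    tmSubst^[n] (v ++ w) = tmSubst^[n] v ++ tmSubst^[n] w := by
  induction n generalizing v w with
  | zero => rfl
  | succ n ih => simp only [Function.iterate_succ_apply, tmSubst_append, ih]

theorem length_le_length_iterate_tmSubst (n : ℕ) (v : List ℕ) :
    v.length ≤ (tmSubst^[n] v).length := by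
  induction n with
  | zero => rfl
  | succ n ih =>
    rw [Function.iterate_succ_apply', length_tmSubst]
    omega

theorem blk_eq_iterate_tmSubst (i n : ℕ) : blk i n = tmSubst^[n] [i] := by
  induction n generalizing i with
  | zero => rfl
  | succ n ih =>
    rw [blk, ih, ih, ← iterate_tmSubst_append, Function.iterate_succ_apply]
    rfl

theorem occursAt_tmSubst_iff {m : ℕ} {v : List ℕ} :
    OccursAt tm (2 * m) (tmSubst v) ↔ OccursAt tm m v := by
  induction v generalizing m with
  | nil => rfl
  | cons i v ih =>
    have htail : OccursAt tm (2 * m + 1 + 1) (tmSubst v) ↔ OccursAt tm (m + 1) v :=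
      ih (m := m + 1)
    simp only [tmSubst_cons, OccursAt, htail, tm_two_mul, tm_two_mul_add_one]
    exact ⟨fun ⟨hi, _, hv⟩ => ⟨hi, hv⟩, fun ⟨hi, hv⟩ => ⟨hi, by rw [hi], hv⟩⟩

theorem not_occursAt_two_mul_cons_tmSubst {j q : ℕ} {v : List ℕ} (hv : 2 ≤ v.length) :
    ¬ OccursAt tm (2 * q) (j :: tmSubst v) := by
  match v, hv with
  | b :: c :: v, _ =>
    rintro ⟨-, h₁, h₂, h₃, h₄, -⟩
    have e₀ := tm_two_mul_add_one q
    have e₁ := tm_two_mul (q + 1)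
    have e₂ := tm_two_mul_add_one (q + 1)
    have e₃ := tm_two_mul (q + 2)
    have := tm_lt_two q
    have := tm_lt_two (q + 1)
    simp only [mul_add, add_assoc, Nat.reduceMul, Nat.reduceAdd] at *
    have hq : tm q = tm (q + 1) := by omega
    have hq' : tm (q + 1) = tm (q + 2) := by omega
    exact tm_no_cube hq hq'

theorem OccursAt.desubst_cons {j p : ℕ} {v : List ℕ} (hv : 2 ≤ v.length)
    (h : OccursAt tm p (j :: tmSubst v)) :
    ∃ q, p = 2 * q + 1 ∧ OccursAt tm q ((1 - j) :: v) := by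
  obtain ⟨q, rfl | rfl⟩ := p.even_or_odd'
  · exact absurd h (not_occursAt_two_mul_cons_tmSubst hv)
  · obtain ⟨hj, hv'⟩ := h
    refine ⟨q, rfl, ?_, occursAt_tmSubst_iff.1 hv'⟩
    have := tm_two_mul_add_one q
    have := tm_lt_two q
    omega

theorem isFactor_tmSubst {v : List ℕ} (h : IsFactor v) : IsFactor (tmSubst v) := by
  obtain ⟨hv, m, hm⟩ := isFactor_iff_occursAt.1 h
  refine isFactor_iff_occursAt.2 ⟨?_, 2 * m, occursAt_tmSubst_iff.2 hm⟩
  obtain ⟨i, w, rfl⟩ := List.exists_cons_of_ne_nil hv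
  exact List.cons_ne_nil _ _

theorem isFactor_cons_tmSubst_iff {j : ℕ} {v : List ℕ} (hj : j < 2) (hv : 2 ≤ v.length) :
    IsFactor (j :: tmSubst v) ↔ IsFactor ((1 - j) :: v) := by
  constructor
  · intro h
    obtain ⟨p, hp⟩ := isFactor_cons_iff_occursAt.1 h
    obtain ⟨q, -, hq⟩ := hp.desubst_cons hv
    exact isFactor_cons_iff_occursAt.2 ⟨q, hq⟩
  · intro h
    have h' := (isFactor_tmSubst h).of_cons
    rwa [Nat.sub_sub_self (by omega)] at h'

theorem IsFactor.head_eq_one_sub {i j : ℕ} {v : List ℕ} (hv : 2 ≤ v.length)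
    (h : IsFactor (i :: j :: tmSubst v)) : i = 1 - j := by
  obtain ⟨p, hi, hp⟩ := isFactor_cons_iff_occursAt.1 h
  obtain ⟨q, hpq, hq, -⟩ := hp.desubst_cons hv
  obtain rfl : p = 2 * q := by omega
  rw [← hi, tm_two_mul, hq]

theorem isFactor_tmSubst_iff {v : List ℕ} (hv : 3 ≤ v.length) :
    IsFactor (tmSubst v) ↔ IsFactor v := by
  refine ⟨fun h => ?_, isFactor_tmSubst⟩
  match v, hv with
  | i :: v, hv =>
    have hi := h.head_lt_two
    have h' := (isFactor_cons_tmSubst_iff (by omega) (by simpa using hv)).1 h.of_cons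
    rwa [Nat.sub_sub_self (by omega)] at h'

theorem isFactor_iterate_tmSubst_iff {v : List ℕ} (hv : 3 ≤ v.length) (n : ℕ) :
    IsFactor (tmSubst^[n] v) ↔ IsFactor v := by
  induction n with
  | zero => rfl
  | succ n ih =>
    rw [Function.iterate_succ_apply',
      isFactor_tmSubst_iff (hv.trans (length_le_length_iterate_tmSubst n v)), ih]

namespace IsFactorWeight

variable {φ : List ℕ → ℝ}

theorem apply_tmSubst_cons (hφ : IsFactorWeight φ) {i : ℕ} {v : List ℕ} (hv : 2 ≤ v.length)
    (h : IsFactor (i :: v)) :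
    φ (tmSubst (i :: v)) = φ ((1 - i) :: tmSubst v) := by
  refine hφ.apply_cons_of_not_isFactor i ((1 - i) :: tmSubst v) (isFactor_tmSubst h) ?_ fun h' => ?_
  · rw [List.length_cons, length_tmSubst]
    omega
  · have := h'.head_eq_one_sub hv
    have := h.head_lt_two
    omega

theorem apply_tmSubst_cons_of_isFactor (hφ : IsFactorWeight φ) {i : ℕ} {v : List ℕ}
    (hv : 2 ≤ v.length) (h : IsFactor (i :: v)) (h' : IsFactor ((1 - i) :: v)) :
    φ (tmSubst (i :: v)) = φ (tmSubst v) / 2 := by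
  have hi := h.head_lt_two
  rw [hφ.apply_tmSubst_cons hv h]
  refine hφ.apply_cons_of_isFactor _ _ (isFactor_tmSubst h).of_cons ?_ ?_
  · rw [length_tmSubst]
    omega
  · rwa [isFactor_cons_tmSubst_iff (by omega) hv, Nat.sub_sub_self (by omega)]

theorem apply_tmSubst_cons_of_not_isFactor (hφ : IsFactorWeight φ) {i : ℕ} {v : List ℕ}
    (hv : 2 ≤ v.length) (h : IsFactor (i :: v)) (h' : ¬ IsFactor ((1 - i) :: v)) :
    φ (tmSubst (i :: v)) = φ (tmSubst v) := by
  have hi := h.head_lt_two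
  rw [hφ.apply_tmSubst_cons hv h]
  refine hφ.apply_cons_of_not_isFactor _ _ (isFactor_tmSubst h).of_cons ?_ ?_
  · rw [length_tmSubst]
    omega
  · rwa [isFactor_cons_tmSubst_iff (by omega) hv, Nat.sub_sub_self (by omega)]

theorem apply_tmSubst_pair_self (hφ : IsFactorWeight φ) {b : ℕ} (h : IsFactor [b, b]) :
    φ (tmSubst [b, b]) = 1 / 12 := by
  have hsuffix : IsFactor [1 - b, b, 1 - b] := (isFactor_tmSubst h).of_cons
  calc φ (tmSubst [b, b]) = φ [1 - b, b, 1 - b] / 2 :=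
        hφ.apply_cons_of_isFactor _ _ (isFactor_tmSubst h) le_rfl
          (isFactor_square_append_pair h.head_lt_two)
    _ = 1 / 12 := by
        rw [hφ.apply_of_length_eq_three _ hsuffix rfl]
        norm_num

theorem apply_tmSubst_pair_of_ne (hφ : IsFactorWeight φ) {b c : ℕ} (h : IsFactor [b, c])
    (hbc : b ≠ c) :
    φ (tmSubst [b, c]) = 1 / 6 := by
  have hb := h.head_lt_two
  have hc := h.of_cons.head_lt_two
  obtain rfl : c = 1 - b := by omega
  calc φ (tmSubst [b, 1 - b]) = φ [1 - b, 1 - b, 1 - (1 - b)] :=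
        hφ.apply_cons_of_not_isFactor _ _ (isFactor_tmSubst h) le_rfl (not_isFactor_cube _ _)
    _ = 1 / 6 := hφ.apply_of_length_eq_three _ (isFactor_tmSubst h).of_cons rfl

theorem apply_tmSubst_triple (hφ : IsFactorWeight φ) {a b c : ℕ} (h : IsFactor [a, b, c]) :
    φ (tmSubst [a, b, c]) = 1 / 12 := by
  have ha := h.head_lt_two
  have hb := h.of_cons.head_lt_two
  have hc := h.of_cons.of_cons.head_lt_two
  by_cases hbc : b = c
  · subst hbc
    have hab : a ≠ b := by
      rintro rfl
      exact not_isFactor_cube _ _ h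
    have hforced : ¬ IsFactor [1 - a, b, b] := by
      obtain rfl : b = 1 - a := by omega
      exact not_isFactor_cube _ _
    rw [hφ.apply_tmSubst_cons_of_not_isFactor le_rfl h hforced,
      hφ.apply_tmSubst_pair_self h.of_cons]
  · have hfree : IsFactor [1 - a, b, c] := isFactor_cons_pair_of_ne (by omega) hb hc hbc
    rw [hφ.apply_tmSubst_cons_of_isFactor le_rfl h hfree, hφ.apply_tmSubst_pair_of_ne h.of_cons hbc]
    norm_num

theorem apply_tmSubst (hφ : IsFactorWeight φ) {v : List ℕ} (hv : 3 ≤ v.length) (h : IsFactor v) :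
    φ (tmSubst v) = φ v / 2 := by
  match v, hv with
  | [a, b, c], _ =>
    rw [hφ.apply_tmSubst_triple h, hφ.apply_of_length_eq_three _ h rfl]
    norm_num
  | a :: b :: c :: d :: v, _ =>
    have hlen : 3 ≤ (b :: c :: d :: v).length := by simp
    have ih : φ (tmSubst (b :: c :: d :: v)) = φ (b :: c :: d :: v) / 2 :=
      hφ.apply_tmSubst hlen h.of_cons
    by_cases h' : IsFactor ((1 - a) :: b :: c :: d :: v)
    · rw [hφ.apply_tmSubst_cons_of_isFactor (by omega) h h',
        hφ.apply_cons_of_isFactor _ _ h hlen h', ih]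
    · rw [hφ.apply_tmSubst_cons_of_not_isFactor (by omega) h h',
        hφ.apply_cons_of_not_isFactor _ _ h hlen h', ih]

theorem apply_iterate_tmSubst (hφ : IsFactorWeight φ) {v : List ℕ} (hv : 3 ≤ v.length)
    (h : IsFactor v) (n : ℕ) :
    φ (tmSubst^[n] v) = φ v / 2 ^ n := by
  induction n with
  | zero => simp
  | succ n ih =>
    rw [Function.iterate_succ_apply',
      hφ.apply_tmSubst (hv.trans (length_le_length_iterate_tmSubst n v))
        ((isFactor_iterate_tmSubst_iff hv n).2 h), ih, pow_succ, div_div]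

end IsFactorWeight

/-- The value of `φ` on any factor of the form `i₁⁽ⁿ⁾ i₂⁽ⁿ⁾ i₃⁽ⁿ⁾` is `1/(6·2ⁿ)`. -/
theorem phi_on_three_blocks (φ : List ℕ → ℝ)
    (hφ3 : ∀ α : List ℕ, IsFactor α → α.length = 3 → φ α = 1 / 6)
    (hφ1 : ∀ (i : ℕ) (α : List ℕ), IsFactor (i :: α) → 3 ≤ α.length →
      ¬ IsFactor ((1 - i) :: α) → φ (i :: α) = φ α)
    (hφ2 : ∀ (i : ℕ) (α : List ℕ), IsFactor (i :: α) → 3 ≤ α.length →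
      IsFactor ((1 - i) :: α) → φ (i :: α) = φ α / 2) :
    ∀ (n : ℕ) (i₁ i₂ i₃ : ℕ), (i₁ = 0 ∨ i₁ = 1) → (i₂ = 0 ∨ i₂ = 1) → (i₃ = 0 ∨ i₃ = 1) →
      IsFactor (blk i₁ n ++ blk i₂ n ++ blk i₃ n) →
      φ (blk i₁ n ++ blk i₂ n ++ blk i₃ n) = 1 / (6 * 2 ^ n) := by
  intro n i₁ i₂ i₃ _ _ _ hF
  have hφ : IsFactorWeight φ := ⟨hφ3, hφ1, hφ2⟩
  have hblk : blk i₁ n ++ blk i₂ n ++ blk i₃ n = tmSubst^[n] [i₁, i₂, i₃] := by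
    simp only [blk_eq_iterate_tmSubst, ← iterate_tmSubst_append, List.cons_append, List.nil_append]
  rw [hblk] at hF ⊢
  have hF₀ : IsFactor [i₁, i₂, i₃] := (isFactor_iterate_tmSubst_iff le_rfl n).1 hF
  rw [hφ.apply_iterate_tmSubst le_rfl hF₀, hφ.apply_of_length_eq_three _ hF₀ rfl, div_div]
end

section
/- Suppose ψ and ψ' are two functions from the set of factors of ω to ℝ, each satisfying: it is strictly positive on every factor; its values on the two one-letter factors 0 and 1 sum to 1; and for every factor α it equals the sum of its values over the one-letter left extensions of α that are factors, and also equals the sum of its values over the one-letter right extensions of α that are factors. Then ψ(α) = ψ'(α) for every factor α of ω. -/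
/-!
Any window of length `2 * 4 ^ n` of `ω` whose left end is a multiple of `2 * 4 ^ n` is made of the
two words `0⁽²ⁿ⁾` and `1⁽²ⁿ⁾`, in one order or the other. Hence, up to a bounded error, a factor `α`
occurs equally often in all these windows, and long windows at arbitrary positions contain `α` with
almost the same frequency. On the other hand an invariant function is a probability on the words of
length `N + |α|`, and by additivity `N ψ(α)` is the mean number of occurrences of `α` among their
first `N` positions. As only factors of `ω` have positive probability, `ψ(α)` is squeezed between
the extreme frequencies of `α` in windows of length `N`, whatever `ψ` is.
-/

section Words

variable {A : Type*} [DecidableEq A]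

/-- The words of length `n` over the alphabet `S`. -/
def wordsOfLength (S : Finset A) : ℕ → Finset (List A)
  | 0 => {[]}
  | n + 1 => (S ×ˢ wordsOfLength S n).image fun p => p.1 :: p.2

theorem mem_wordsOfLength {S : Finset A} {n : ℕ} {w : List A} :
    w ∈ wordsOfLength S n ↔ w.length = n ∧ ∀ a ∈ w, a ∈ S := by
  induction n generalizing w with
  | zero => simp +contextual [wordsOfLength]
  | succ n ih => cases w <;> simp [wordsOfLength, ih, and_assoc, and_left_comm]

theorem sum_wordsOfLength_succ (S : Finset A) (n : ℕ) (g : List A → ℝ) :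
    ∑ w ∈ wordsOfLength S (n + 1), g w = ∑ a ∈ S, ∑ w ∈ wordsOfLength S n, g (a :: w) := by
  rw [wordsOfLength, Finset.sum_image (by simp +contextual [Set.InjOn]), Finset.sum_product]

theorem sum_wordsOfLength_add (S : Finset A) (m n : ℕ) (g : List A → ℝ) :
    ∑ w ∈ wordsOfLength S (m + n), g w =
      ∑ u ∈ wordsOfLength S m, ∑ v ∈ wordsOfLength S n, g (u ++ v) := by
  induction m generalizing g with
  | zero => simp [wordsOfLength]
  | succ m ih =>
    rw [Nat.add_right_comm]
    simp only [sum_wordsOfLength_succ, ih, List.cons_append]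

/-- The number of positions `j < N` at which `α` occurs in the finite word `w`. -/
def countInWord (α : List A) (N : ℕ) (w : List A) : ℕ :=
  Nat.count (fun j => (w.drop j).take α.length = α) N

variable {S : Finset A} {Φ : List A → ℝ}

theorem sum_wordsOfLength_append_right (hcons : ∀ w, ∑ a ∈ S, Φ (a :: w) = Φ w)
    (n : ℕ) (u : List A) : ∑ x ∈ wordsOfLength S n, Φ (x ++ u) = Φ u := by
  induction n with
  | zero => simp [wordsOfLength]
  | succ n ih =>
    rw [sum_wordsOfLength_succ, Finset.sum_comm]
    simp only [List.cons_append, hcons, ih]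

theorem sum_wordsOfLength_append_left (hconcat : ∀ w, ∑ a ∈ S, Φ (w ++ [a]) = Φ w)
    (n : ℕ) (u : List A) : ∑ y ∈ wordsOfLength S n, Φ (u ++ y) = Φ u := by
  induction n generalizing u with
  | zero => simp [wordsOfLength]
  | succ n ih =>
    rw [sum_wordsOfLength_succ, ← hconcat u]
    refine Finset.sum_congr rfl fun a _ => ?_
    simpa only [List.append_assoc, List.singleton_append] using ih (u ++ [a])

theorem sum_wordsOfLength_occurring_at (hcons : ∀ w, ∑ a ∈ S, Φ (a :: w) = Φ w)
    (hconcat : ∀ w, ∑ a ∈ S, Φ (w ++ [a]) = Φ w) {α : List A} (hα : ∀ a ∈ α, a ∈ S)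
    {j L : ℕ} (hj : j + α.length ≤ L) :
    ∑ w ∈ wordsOfLength S L, (if (w.drop j).take α.length = α then Φ w else 0) = Φ α := by
  obtain ⟨b, rfl⟩ := Nat.exists_eq_add_of_le hj
  calc ∑ w ∈ wordsOfLength S (j + α.length + b),
        (if (w.drop j).take α.length = α then Φ w else 0)
      = ∑ x ∈ wordsOfLength S j, ∑ u ∈ wordsOfLength S α.length, ∑ y ∈ wordsOfLength S b,
          if u = α then Φ (x ++ u ++ y) else 0 := by
        rw [add_assoc, sum_wordsOfLength_add]
        refine Finset.sum_congr rfl fun x hx => ?_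
        rw [sum_wordsOfLength_add]
        refine Finset.sum_congr rfl fun u hu => Finset.sum_congr rfl fun y _ => ?_
        rw [List.drop_left' (mem_wordsOfLength.1 hx).1,
          List.take_left' (mem_wordsOfLength.1 hu).1, List.append_assoc]
    _ = ∑ x ∈ wordsOfLength S j, ∑ u ∈ wordsOfLength S α.length,
          if u = α then Φ (x ++ u) else 0 := by
        simp only [Finset.sum_ite_irrel, Finset.sum_const_zero,
          sum_wordsOfLength_append_left hconcat]
    _ = ∑ x ∈ wordsOfLength S j, Φ (x ++ α) := by
        simp only [Finset.sum_ite_eq', mem_wordsOfLength.2 ⟨rfl, hα⟩, if_true]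
    _ = Φ α := sum_wordsOfLength_append_right hcons j α

theorem sum_wordsOfLength_countInWord_mul (hcons : ∀ w, ∑ a ∈ S, Φ (a :: w) = Φ w)
    (hconcat : ∀ w, ∑ a ∈ S, Φ (w ++ [a]) = Φ w) {α : List A} (hα : ∀ a ∈ α, a ∈ S) (N : ℕ) :
    ∑ w ∈ wordsOfLength S (N + α.length), countInWord α N w * Φ w = N * Φ α := by
  calc ∑ w ∈ wordsOfLength S (N + α.length), countInWord α N w * Φ w
      = ∑ w ∈ wordsOfLength S (N + α.length), ∑ j ∈ Finset.range N,
          if (w.drop j).take α.length = α then Φ w else 0 := by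
        simp only [countInWord, Nat.count_eq_card_filter_range, Finset.natCast_card_filter,
          Finset.sum_mul, ite_mul, one_mul, zero_mul]
    _ = ∑ _j ∈ Finset.range N, Φ α := by
        rw [Finset.sum_comm]
        refine Finset.sum_congr rfl fun j hj =>
          sum_wordsOfLength_occurring_at hcons hconcat hα ?_
        have := Finset.mem_range.1 hj
        omega
    _ = N * Φ α := by rw [Finset.sum_const, Finset.card_range, nsmul_eq_mul]

end Words

section Sequences

variable {A : Type*} (x : ℤ → A)

/-- The word `x_m x_{m+1} ⋯ x_{m+k-1}` read in the two-sided sequence `x`. -/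
def block (m : ℤ) (k : ℕ) : List A := (List.range k).map fun j : ℕ => x (m + j)

/-- The nonempty factors of the two-sided sequence `x`. -/
def factorSet : Set (List A) := {α | α ≠ [] ∧ ∃ m : ℤ, α = block x m α.length}

@[simp] theorem length_block (m : ℤ) (k : ℕ) : (block x m k).length = k := by simp [block]

theorem block_add (m : ℤ) (k l : ℕ) : block x m (k + l) = block x m k ++ block x (m + k) l := by
  simp [block, List.range_add, Function.comp_def, add_assoc]

theorem take_drop_block (m : ℤ) {j k L : ℕ} (h : j + k ≤ L) :
    ((block x m L).drop j).take k = block x (m + j) k := by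
  obtain ⟨b, rfl⟩ := Nat.exists_eq_add_of_le h
  rw [add_assoc, block_add, block_add, List.drop_left' (length_block ..),
    List.take_left' (length_block ..)]

variable {x}

theorem mem_factorSet_of_isInfix {α β : List A} (hα : α ∈ factorSet x) (hβα : β <:+: α)
    (hβ : β ≠ []) : β ∈ factorSet x := by
  obtain ⟨u, v, rfl⟩ := hβα
  obtain ⟨-, m, hm⟩ := hα
  refine ⟨hβ, m + u.length, ?_⟩
  rw [← take_drop_block x m (show u.length + β.length ≤ (u ++ β ++ v).length by simp), ← hm]
  simp

theorem exists_eq_of_mem_factorSet {α : List A} (hα : α ∈ factorSet x) {a : A} (ha : a ∈ α) :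
    ∃ i, x i = a := by
  obtain ⟨-, m, hm⟩ := hα
  rw [hm, block, List.mem_map] at ha
  obtain ⟨j, -, rfl⟩ := ha
  exact ⟨_, rfl⟩

variable [DecidableEq A]

variable (x) in
/-- The number of occurrences of `α` in `x` that start in the window `[m, m + N)`; they may end
beyond it. -/
def occurrences (α : List A) (m : ℤ) (N : ℕ) : ℕ :=
  Nat.count (fun j => block x (m + j) α.length = α) N

theorem occurrences_le (α : List A) (m : ℤ) (N : ℕ) : occurrences x α m N ≤ N :=
  Nat.count_le _

theorem occurrences_add (α : List A) (m : ℤ) (M N : ℕ) :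
    occurrences x α m (M + N) = occurrences x α m M + occurrences x α (m + M) N := by
  simp only [occurrences, Nat.count_add, Nat.cast_add, add_assoc]

theorem countInWord_block (α : List A) (m : ℤ) (N : ℕ) :
    countInWord α N (block x m (N + α.length)) = occurrences x α m N := by
  simp only [countInWord, occurrences, Nat.count_eq_card_filter_range]
  congr 1
  refine Finset.filter_congr fun j hj => ?_
  have := Finset.mem_range.1 hj
  rw [take_drop_block x m (by omega)]

theorem occurrences_le_add_of_block_eq (α : List A) {m m' : ℤ} {N : ℕ}
    (h : block x m N = block x m' N) :
    occurrences x α m N ≤ occurrences x α m' N + α.length := by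
  obtain hN | hN := le_total N α.length
  · have := occurrences_le (x := x) α m N
    omega
  -- Occurrences starting before `m + (N - |α|)` lie inside the window.
  · obtain ⟨M, rfl⟩ := Nat.exists_eq_add_of_le' hN
    have hM : occurrences x α m M = occurrences x α m' M := by
      rw [← countInWord_block, ← countInWord_block, h]
    have := occurrences_le (x := x) α (m + M) α.length
    rw [occurrences_add, occurrences_add, hM]
    omega

theorem abs_occurrences_sub_le_of_block_eq (α : List A) {m m' : ℤ} {N : ℕ}
    (h : block x m N = block x m' N) :
    |(occurrences x α m N - occurrences x α m' N : ℝ)| ≤ α.length := by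
  have h₁ := occurrences_le_add_of_block_eq α h
  have h₂ := occurrences_le_add_of_block_eq α h.symm
  rify at h₁ h₂
  exact abs_sub_le_iff.2 ⟨by linarith, by linarith⟩

theorem abs_occurrences_add_sub_le (α : List A) (m : ℤ) (r N : ℕ) :
    |(occurrences x α (m + r) N - occurrences x α m N : ℝ)| ≤ r := by
  have hsplit : occurrences x α m r + occurrences x α (m + r) N =
      occurrences x α m N + occurrences x α (m + N) r := by
    rw [← occurrences_add, ← occurrences_add, add_comm]
  have h₁ := occurrences_le (x := x) α m r
  have h₂ := occurrences_le (x := x) α (m + N) r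
  rify at hsplit h₁ h₂
  exact abs_sub_le_iff.2
    ⟨by linarith [Nat.cast_nonneg (α := ℝ) (occurrences x α m r)],
      by linarith [Nat.cast_nonneg (α := ℝ) (occurrences x α (m + N) r)]⟩

section AlignedWindows

variable {α : List A} {M : ℕ} {X D : ℝ}

theorem abs_occurrences_mul_sub_le (hX : ∀ q : ℤ, |occurrences x α (q * M) M - X| ≤ D)
    (q : ℤ) (K : ℕ) : |occurrences x α (q * M) (K * M) - K * X| ≤ K * D := by
  induction K with
  | zero => simp [occurrences]
  | succ K ih =>
    have hshift : q * M + (K * M : ℕ) = (q + K) * M := by push_cast; ring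
    rw [Nat.succ_mul, occurrences_add, hshift]
    push_cast
    calc |(occurrences x α (q * M) (K * M) + occurrences x α ((q + K) * M) M - (K + 1) * X : ℝ)|
        = |(occurrences x α (q * M) (K * M) - K * X) +
            (occurrences x α ((q + K) * M) M - X)| := by ring_nf
      _ ≤ K * D + D := (abs_add_le _ _).trans (add_le_add ih (hX (q + K)))
      _ = (K + 1) * D := by ring

theorem abs_occurrences_sub_le (hM : 0 < M)
    (hX : ∀ q : ℤ, |occurrences x α (q * M) M - X| ≤ D) (m : ℤ) (K : ℕ) :
    |occurrences x α m (K * M) - K * X| ≤ K * D + M := by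
  have hM' : (0 : ℤ) < M := by exact_mod_cast hM
  obtain ⟨r, hr⟩ := Int.eq_ofNat_of_zero_le (Int.emod_nonneg m hM'.ne')
  have hrM : (r : ℝ) ≤ M := by
    have := Int.emod_lt_of_pos m hM'
    exact_mod_cast (show r ≤ M by omega)
  obtain ⟨q, rfl⟩ : ∃ q : ℤ, m = q * M + r :=
    ⟨m / M, by rw [← hr, mul_comm, Int.mul_ediv_add_emod]⟩
  calc |occurrences x α (q * M + r) (K * M) - K * X|
      ≤ |(occurrences x α (q * M + r) (K * M) - occurrences x α (q * M) (K * M) : ℝ)| +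
          |occurrences x α (q * M) (K * M) - K * X| := abs_sub_le _ _ _
    _ ≤ r + K * D :=
        add_le_add (abs_occurrences_add_sub_le ..) (abs_occurrences_mul_sub_le hX q K)
    _ ≤ K * D + M := by linarith

end AlignedWindows

variable (x) in
/-- Every word has a uniform frequency in `x`. The condition is in Cauchy form: instead of a
limiting frequency it asks, for each `ε`, for a length `N` such that all windows of length `N`
contain the same number of occurrences up to `ε * N`. -/
def HasUniformFrequencies : Prop :=
  ∀ α : List A, ∀ ε > 0, ∃ N : ℕ, 0 < N ∧ ∃ X : ℝ, ∀ m : ℤ, |occurrences x α m N - X| ≤ ε * N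

theorem hasUniformFrequencies_of_aligned
    (h : ∀ α : List A, ∃ D : ℝ, ∀ n : ℕ, ∃ M > n, ∃ X : ℝ, ∀ q : ℤ,
      |occurrences x α (q * M) M - X| ≤ D) :
    HasUniformFrequencies x := by
  intro α ε hε
  obtain ⟨D, hD⟩ := h α
  obtain ⟨n, hn⟩ := exists_nat_ge ((D + 1) / ε)
  obtain ⟨M, hnM, X, hX⟩ := hD n
  have hM : 0 < M := by omega
  refine ⟨M * M, Nat.mul_pos hM hM, M * X, fun m => ?_⟩
  have hDM : D + 1 ≤ ε * M := by
    rw [mul_comm, ← div_le_iff₀ hε]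
    exact hn.trans (by exact_mod_cast hnM.le)
  calc |occurrences x α m (M * M) - M * X|
      ≤ M * D + M := abs_occurrences_sub_le hM hX m M
    _ = (D + 1) * M := by ring
    _ ≤ ε * M * M := by gcongr
    _ = ε * (M * M : ℕ) := by push_cast; ring

end Sequences

section InvariantFunctions

variable {A : Type*} {x : ℤ → A} {S : Finset A} {ψ ψ' : List A → ℝ}

variable (x S ψ) in
/-- A nonnegative function on the nonempty factors of `x`, normalized on letters and additive under
one-letter extensions on either side. For `x` with letters in `S` this is a shift-invariant
probability measure on the closure of the orbit of `x`, given by its values on cylinders. Extensions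
that are not factors contribute `0` to the sums. -/
structure IsInvariantFunction : Prop where
  nonneg : ∀ α ∈ factorSet x, 0 ≤ ψ α
  sum_letter : ∑ a ∈ S, (factorSet x).indicator ψ [a] = 1
  sum_cons : ∀ α ∈ factorSet x, ∑ a ∈ S, (factorSet x).indicator ψ (a :: α) = ψ α
  sum_concat : ∀ α ∈ factorSet x, ∑ a ∈ S, (factorSet x).indicator ψ (α ++ [a]) = ψ α

variable (x ψ) in
/-- The extension of `ψ` from the nonempty factors of `x` to all words, with value `1` at the empty
word and `0` at words that are not factors, so that additivity holds without exception. -/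
noncomputable def extendToWords : List A → ℝ
  | [] => 1
  | a :: w => (factorSet x).indicator ψ (a :: w)

theorem extendToWords_of_ne_nil {w : List A} (hw : w ≠ []) :
    extendToWords x ψ w = (factorSet x).indicator ψ w := by
  cases w with
  | nil => contradiction
  | cons a w => rfl

theorem extendToWords_of_mem {α : List A} (hα : α ∈ factorSet x) : extendToWords x ψ α = ψ α := by
  rw [extendToWords_of_ne_nil hα.1, Set.indicator_of_mem hα]

theorem exists_eq_block_of_extendToWords_ne_zero {w : List A} (hw : extendToWords x ψ w ≠ 0) :
    ∃ m, w = block x m w.length := by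
  obtain rfl | hnil := eq_or_ne w []
  · exact ⟨0, rfl⟩
  · rw [extendToWords_of_ne_nil hnil] at hw
    exact (Set.mem_of_indicator_ne_zero hw).2

namespace IsInvariantFunction

theorem extendToWords_nonneg (hψ : IsInvariantFunction x S ψ) :
    ∀ w, 0 ≤ extendToWords x ψ w
  | [] => zero_le_one
  | _ :: _ => Set.indicator_nonneg hψ.nonneg _

theorem sum_extendToWords_cons (hψ : IsInvariantFunction x S ψ) (w : List A) :
    ∑ a ∈ S, extendToWords x ψ (a :: w) = extendToWords x ψ w := by
  obtain rfl | hnil := eq_or_ne w []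
  · exact hψ.sum_letter
  by_cases hw : w ∈ factorSet x
  · rw [extendToWords_of_mem hw]
    exact hψ.sum_cons w hw
  · have haw (a : A) : a :: w ∉ factorSet x := fun h =>
      hw (mem_factorSet_of_isInfix h (List.suffix_cons a w).isInfix hnil)
    simp [extendToWords_of_ne_nil, hnil, hw, haw]

theorem sum_extendToWords_concat (hψ : IsInvariantFunction x S ψ) (w : List A) :
    ∑ a ∈ S, extendToWords x ψ (w ++ [a]) = extendToWords x ψ w := by
  obtain rfl | hnil := eq_or_ne w []
  · exact hψ.sum_letter
  by_cases hw : w ∈ factorSet x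
  · simpa [extendToWords_of_ne_nil, hw, hnil] using hψ.sum_concat w hw
  · have hwa (a : A) : w ++ [a] ∉ factorSet x := fun h =>
      hw (mem_factorSet_of_isInfix h (List.prefix_append w [a]).isInfix hnil)
    simp [extendToWords_of_ne_nil, hnil, hw, hwa]

variable [DecidableEq A]

theorem sum_extendToWords (hψ : IsInvariantFunction x S ψ) (L : ℕ) :
    ∑ w ∈ wordsOfLength S L, extendToWords x ψ w = 1 :=
  sum_wordsOfLength_append_left hψ.sum_extendToWords_concat L []

theorem abs_mul_sub_le (hψ : IsInvariantFunction x S ψ) {α : List A} (hα : α ∈ factorSet x)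
    (hαS : ∀ a ∈ α, a ∈ S) {N : ℕ} {X E : ℝ} (hX : ∀ m, |occurrences x α m N - X| ≤ E) :
    |N * ψ α - X| ≤ E := by
  set L := N + α.length with hL
  let Φ := extendToWords x ψ
  have hmean : N * ψ α - X = ∑ w ∈ wordsOfLength S L, (countInWord α N w - X) * Φ w := by
    simp only [sub_mul, Finset.sum_sub_distrib, ← Finset.mul_sum]
    rw [sum_wordsOfLength_countInWord_mul hψ.sum_extendToWords_cons hψ.sum_extendToWords_concat
      hαS, hψ.sum_extendToWords, mul_one, extendToWords_of_mem hα]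
  have hterm : ∀ w ∈ wordsOfLength S L, |(countInWord α N w - X) * Φ w| ≤ E * Φ w := by
    intro w hw
    obtain hw0 | hw0 := eq_or_ne (Φ w) 0
    · simp [hw0]
    obtain ⟨m, hm⟩ := exists_eq_block_of_extendToWords_ne_zero hw0
    have hcount : countInWord α N w = occurrences x α m N := by
      rw [hm, (mem_wordsOfLength.1 hw).1, hL, countInWord_block]
    rw [abs_mul, abs_of_nonneg (hψ.extendToWords_nonneg w), hcount]
    exact mul_le_mul_of_nonneg_right (hX m) (hψ.extendToWords_nonneg w)
  calc |N * ψ α - X| ≤ ∑ w ∈ wordsOfLength S L, |(countInWord α N w - X) * Φ w| :=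
        hmean ▸ Finset.abs_sum_le_sum_abs _ _
    _ ≤ ∑ w ∈ wordsOfLength S L, E * Φ w := Finset.sum_le_sum hterm
    _ = E := by rw [← Finset.mul_sum, hψ.sum_extendToWords, mul_one]

end IsInvariantFunction

theorem invariant_function_unique_general [DecidableEq A] (hx : HasUniformFrequencies x)
    (hxS : ∀ i, x i ∈ S) (hψ : IsInvariantFunction x S ψ) (hψ' : IsInvariantFunction x S ψ') :
    ∀ α ∈ factorSet x, ψ α = ψ' α := by
  intro α hα
  have hαS : ∀ a ∈ α, a ∈ S := fun a ha =>
    let ⟨i, hi⟩ := exists_eq_of_mem_factorSet hα ha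
    hi ▸ hxS i
  refine eq_of_abs_sub_le_all fun ε hε => ?_
  obtain ⟨N, hN, X, hX⟩ := hx α (ε / 2) (half_pos hε)
  have hN' : (0 : ℝ) < N := by exact_mod_cast hN
  refine le_of_mul_le_mul_left ?_ hN'
  calc N * |ψ α - ψ' α| = |N * ψ α - N * ψ' α| := by
        rw [← mul_sub, abs_mul, abs_of_pos hN']
    _ ≤ |N * ψ α - X| + |X - N * ψ' α| := abs_sub_le _ _ _
    _ ≤ ε / 2 * N + ε / 2 * N :=
        add_le_add (hψ.abs_mul_sub_le hα hαS hX)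
          (abs_sub_comm X _ ▸ hψ'.abs_mul_sub_le hα hαS hX)
    _ = N * ε := by ring

end InvariantFunctions

section ThueMorse

theorem tmZ_natCast (n : ℕ) : tmZ n = tm n := by simp [tmZ]

theorem tmZ_negSucc (n : ℕ) : tmZ (Int.negSucc n) = tm n := by
  rw [tmZ, if_neg (by omega)]
  congr 1
  omega

theorem tmZ_lt_two (q : ℤ) : tmZ q < 2 := by
  cases q with
  | ofNat n => exact tmZ_natCast n ▸ tm_lt_two n
  | negSucc n => exact tmZ_negSucc n ▸ tm_lt_two n

theorem tmZ_two_mul_add_one (q : ℤ) : tmZ (2 * q + 1) = 1 - tmZ (2 * q) := by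
  cases q with
  | ofNat n =>
    have h := tmZ_natCast (2 * n)
    have h' := tmZ_natCast (2 * n + 1)
    push_cast at h h'
    rw [Int.ofNat_eq_natCast, h, h', tm_two_mul, tm_two_mul_add_one]
  | negSucc n =>
    rw [show 2 * Int.negSucc n + 1 = Int.negSucc (2 * n) by omega,
      show 2 * Int.negSucc n = Int.negSucc (2 * n + 1) by omega, tmZ_negSucc, tmZ_negSucc,
      tm_two_mul, tm_two_mul_add_one]
    have := tm_lt_two n
    omega

-- For `q < 0` the identity `ω_{2q} = ω_q` fails: reflection makes `ω_{2q} = 1 - ω_q`. Two doublings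
-- restore the sign, which is why scales are powers of `4` below.
theorem tmZ_four_mul (q : ℤ) : tmZ (4 * q) = tmZ q := by
  cases q with
  | ofNat n =>
    rw [Int.ofNat_eq_natCast, show 4 * (n : ℤ) = (2 * (2 * n) : ℕ) by omega, tmZ_natCast,
      tmZ_natCast, tm_two_mul, tm_two_mul]
  | negSucc n =>
    rw [show 4 * Int.negSucc n = Int.negSucc (2 * (2 * n + 1) + 1) by omega, tmZ_negSucc,
      tmZ_negSucc, tm_two_mul_add_one, tm_two_mul_add_one]
    have := tm_lt_two n
    omega

theorem tmZ_four_mul_add_two (q : ℤ) : tmZ (4 * q + 2) = 1 - tmZ q := by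
  cases q with
  | ofNat n =>
    rw [Int.ofNat_eq_natCast, show 4 * (n : ℤ) + 2 = (2 * (2 * n + 1) : ℕ) by omega, tmZ_natCast,
      tmZ_natCast, tm_two_mul, tm_two_mul_add_one]
  | negSucc n =>
    rw [show 4 * Int.negSucc n + 2 = Int.negSucc (2 * (2 * n) + 1) by omega, tmZ_negSucc,
      tmZ_negSucc, tm_two_mul_add_one, tm_two_mul]

theorem block_tmZ_four_pow (n : ℕ) (q : ℤ) :
    block tmZ (q * (4 ^ n : ℕ)) (4 ^ n) = blk (tmZ q) (2 * n) := by
  induction n generalizing q with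
  | zero => simp [block, blk]
  | succ n ih =>
    have hquarters : block tmZ (q * (4 ^ (n + 1) : ℕ)) (4 ^ (n + 1)) =
        blk (tmZ (4 * q)) (2 * n) ++ blk (tmZ (4 * q + 1)) (2 * n) ++
          (blk (tmZ (4 * q + 2)) (2 * n) ++ blk (tmZ (4 * q + 3)) (2 * n)) := by
      simp only [← ih]
      rw [show 4 ^ (n + 1) = 4 ^ n + 4 ^ n + (4 ^ n + 4 ^ n) by ring]
      simp only [block_add]
      congr 3 <;> push_cast <;> ring
    have h₁ : tmZ (4 * q + 1) = 1 - tmZ q := by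
      rw [← tmZ_four_mul q, show 4 * q = 2 * (2 * q) by ring, tmZ_two_mul_add_one]
    have h₃ : tmZ (4 * q + 3) = 1 - (1 - tmZ q) := by
      rw [← tmZ_four_mul_add_two, show 4 * q + 3 = 2 * (2 * q + 1) + 1 by ring,
        tmZ_two_mul_add_one, show 4 * q + 2 = 2 * (2 * q + 1) by ring]
    rw [hquarters, tmZ_four_mul, h₁, tmZ_four_mul_add_two, h₃]
    rfl

theorem tmZ_tmZ (q : ℤ) : tmZ (tmZ q) = tmZ q := by
  have := tmZ_lt_two q
  interval_cases tmZ q <;> simp [tmZ, tm]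

theorem abs_occurrences_tmZ_sub_le (α : List ℕ) (n : ℕ) (q : ℤ) :
    |(occurrences tmZ α (q * (2 * 4 ^ n : ℕ)) (2 * 4 ^ n) -
      (occurrences tmZ α (0 * (4 ^ n : ℕ)) (4 ^ n) +
        occurrences tmZ α (1 * (4 ^ n : ℕ)) (4 ^ n)) : ℝ)| ≤ 2 * α.length := by
  set c : ℤ → ℝ := fun p => occurrences tmZ α (p * (4 ^ n : ℕ)) (4 ^ n) with hc
  have hletter (p : ℤ) : |c p - c (tmZ p)| ≤ α.length :=
    abs_occurrences_sub_le_of_block_eq α <| by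
      rw [block_tmZ_four_pow, block_tmZ_four_pow, tmZ_tmZ]
  have hhalves : (occurrences tmZ α (q * (2 * 4 ^ n : ℕ)) (2 * 4 ^ n) : ℝ) =
      c (2 * q) + c (2 * q + 1) := by
    rw [two_mul (4 ^ n), occurrences_add, Nat.cast_add, hc]
    congr 3 <;> push_cast <;> ring
  have hboth : c (tmZ (2 * q)) + c (tmZ (2 * q + 1)) = c 0 + c 1 := by
    rw [tmZ_two_mul_add_one]
    have := tmZ_lt_two (2 * q)
    interval_cases tmZ (2 * q)
    · rfl
    · exact add_comm _ _
  calc |(occurrences tmZ α (q * (2 * 4 ^ n : ℕ)) (2 * 4 ^ n) - (c 0 + c 1) : ℝ)|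
      = |(c (2 * q) - c (tmZ (2 * q))) + (c (2 * q + 1) - c (tmZ (2 * q + 1)))| := by
        rw [hhalves, ← hboth]
        ring_nf
    _ ≤ α.length + α.length := (abs_add_le _ _).trans (add_le_add (hletter _) (hletter _))
    _ = 2 * α.length := (two_mul _).symm

theorem hasUniformFrequencies_tmZ : HasUniformFrequencies tmZ :=
  hasUniformFrequencies_of_aligned fun α => ⟨2 * α.length, fun n =>
    have hn : n < 4 ^ n := Nat.lt_pow_self (by norm_num)
    ⟨2 * 4 ^ n, by omega, _, abs_occurrences_tmZ_sub_le α n⟩⟩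

theorem tmZ_mem_pair (i : ℤ) : tmZ i ∈ ({0, 1} : Finset ℕ) := by
  have := tmZ_lt_two i
  simp only [Finset.mem_insert, Finset.mem_singleton]
  omega

-- `tmBlock` maps over `List.range k` coerced to a `List ℤ` through the list monad, so the two
-- definitions of blocks do not agree by `rfl`.
theorem tmBlock_eq_block (m : ℤ) (k : ℕ) : tmBlock m k = block tmZ m k := by
  simp [tmBlock, block, ← List.map_eq_flatMap, Function.comp_def]

theorem isFactor_iff_mem_factorSet {α : List ℕ} : IsFactor α ↔ α ∈ factorSet tmZ := by
  simp only [IsFactor, tmBlock_eq_block]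
  rfl

open Classical in
theorem isInvariantFunction_tmZ {ψ : List ℕ → ℝ}
    (hnonneg : ∀ α : List ℕ, IsFactor α → 0 ≤ ψ α)
    (hone : ψ [0] + ψ [1] = 1)
    (hleft : ∀ α : List ℕ, IsFactor α →
      ψ α = (if IsFactor (0 :: α) then ψ (0 :: α) else 0) +
            (if IsFactor (1 :: α) then ψ (1 :: α) else 0))
    (hright : ∀ α : List ℕ, IsFactor α →
      ψ α = (if IsFactor (α ++ [0]) then ψ (α ++ [0]) else 0) +
            (if IsFactor (α ++ [1]) then ψ (α ++ [1]) else 0)) :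
    IsInvariantFunction tmZ {0, 1} ψ := by
  have hzero : [0] ∈ factorSet tmZ := ⟨List.cons_ne_nil _ _, 0, by simp [block, tmZ, tm]⟩
  have hunit : [1] ∈ factorSet tmZ := ⟨List.cons_ne_nil _ _, 1, by simp [block, tmZ, tm]⟩
  simp only [isFactor_iff_mem_factorSet, ← Set.indicator_apply] at hnonneg hleft hright
  refine ⟨hnonneg, ?_, fun α hα => ?_, fun α hα => ?_⟩ <;> rw [Finset.sum_pair zero_ne_one]
  · rw [Set.indicator_of_mem hzero, Set.indicator_of_mem hunit, hone]
  · exact (hleft α hα).symm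
  · exact (hright α hα).symm

end ThueMorse

open Classical in
/-- There is at most one strictly positive function on the factors of the two-sided
Thue–Morse sequence which is normalized on one-letter factors and additive under one-letter
extensions on both sides. -/
theorem invariant_function_unique (ψ ψ' : List ℕ → ℝ)
    (hpos : ∀ α : List ℕ, IsFactor α → 0 < ψ α)
    (hone : ψ [0] + ψ [1] = 1)
    (hleft : ∀ α : List ℕ, IsFactor α →
      ψ α = (if IsFactor (0 :: α) then ψ (0 :: α) else 0) +
            (if IsFactor (1 :: α) then ψ (1 :: α) else 0))
    (hright : ∀ α : List ℕ, IsFactor α →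
      ψ α = (if IsFactor (α ++ [0]) then ψ (α ++ [0]) else 0) +
            (if IsFactor (α ++ [1]) then ψ (α ++ [1]) else 0))
    (hpos' : ∀ α : List ℕ, IsFactor α → 0 < ψ' α)
    (hone' : ψ' [0] + ψ' [1] = 1)
    (hleft' : ∀ α : List ℕ, IsFactor α →
      ψ' α = (if IsFactor (0 :: α) then ψ' (0 :: α) else 0) +
             (if IsFactor (1 :: α) then ψ' (1 :: α) else 0))
    (hright' : ∀ α : List ℕ, IsFactor α →
      ψ' α = (if IsFactor (α ++ [0]) then ψ' (α ++ [0]) else 0) +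
             (if IsFactor (α ++ [1]) then ψ' (α ++ [1]) else 0)) :
    ∀ α : List ℕ, IsFactor α → ψ α = ψ' α :=
  fun α hα => invariant_function_unique_general hasUniformFrequencies_tmZ tmZ_mem_pair
    (isInvariantFunction_tmZ (fun β hβ => (hpos β hβ).le) hone hleft hright)
    (isInvariantFunction_tmZ (fun β hβ => (hpos' β hβ).le) hone' hleft' hright')
    α (isFactor_iff_mem_factorSet.1 hα)
end

section
/- Let t ∈ ℝ and let (x_n)_{n≥0}, (y_n)_{n≥0} be sequences of real numbers with x_0 = t, y_0 = 1/2 − t, and, for all n ≥ 0, x_n = y_{n+1} and y_n = 2·x_{n+1} + x_n. Then for every n ≥ 0, x_n = (1/3)·( (1/2)^{n+1} + (3t − 1/2)·(−1)^n ) and y_n = (1/3)·( (1/2)^{n} − (3t − 1/2)·(−1)^n ). Consequently, if x_n > 0 and y_n > 0 for all n ≥ 0, then t = 1/6, and x_n = 1/(6·2^n), y_n = 1/(3·2^n) for all n ≥ 0. -/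
/-!
The matrix of the recursion has eigenvalues `1/2` and `-1`: the sum `xₙ + yₙ` is halved at each
step, while `yₙ - 2xₙ` only changes sign. Solving these two relations for `xₙ` and `yₙ` gives the
closed forms. If no term is negative, `|yₙ - 2xₙ|` is at most twice the sum, so a quantity of
constant modulus is bounded by one tending to zero; it therefore vanishes, and only the eigenvalue
`1/2` remains.
-/

/-- The linear recursion `xₙ = yₙ₊₁`, `yₙ = 2xₙ₊₁ + xₙ`, with free initial values. It is stated
without division by `2`, so that it makes sense in any semiring. -/
structure IsTraceRecursion {R : Type*} [Semiring R] (x y : ℕ → R) : Prop where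
  eq_succ (n : ℕ) : x n = y (n + 1)
  eq_two_mul_succ_add (n : ℕ) : y n = 2 * x (n + 1) + x n

theorem nonpos_of_forall_pow_mul_le {R : Type*} [Ring R] [LinearOrder R]
    [IsStrictOrderedRing R] [Archimedean R] {b c C : R} (hb : 1 < b)
    (h : ∀ n : ℕ, b ^ n * c ≤ C) : c ≤ 0 := by
  by_contra! hc
  obtain ⟨k, hk⟩ := exists_lt_nsmul hc C
  obtain ⟨n, hn⟩ := pow_unbounded_of_one_lt (k : R) hb
  have : k • c ≤ C := calc
    k • c = k * c := nsmul_eq_mul k c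
    _ ≤ b ^ n * c := by gcongr
    _ ≤ C := h n
  exact this.not_gt hk

namespace IsTraceRecursion

section CommRing

variable {R : Type*} [CommRing R] {x y : ℕ → R}

theorem two_pow_mul_add (h : IsTraceRecursion x y) (n : ℕ) :
    2 ^ n * (x n + y n) = x 0 + y 0 := by
  induction n with
  | zero => simp
  | succ n ih =>
    calc 2 ^ (n + 1) * (x (n + 1) + y (n + 1))
        = 2 ^ n * (x n + (2 * x (n + 1) + x n)) := by rw [← h.eq_succ n]; ring
      _ = 2 ^ n * (x n + y n) := by rw [← h.eq_two_mul_succ_add n]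
      _ = x 0 + y 0 := ih

theorem sub_two_mul (h : IsTraceRecursion x y) (n : ℕ) :
    y n - 2 * x n = (-1) ^ n * (y 0 - 2 * x 0) := by
  induction n with
  | zero => simp
  | succ n ih =>
    calc y (n + 1) - 2 * x (n + 1)
        = -(2 * x (n + 1) + x n - 2 * x n) := by rw [← h.eq_succ n]; ring
      _ = -(y n - 2 * x n) := by rw [← h.eq_two_mul_succ_add n]
      _ = (-1) ^ (n + 1) * (y 0 - 2 * x 0) := by rw [ih]; ring

end CommRing

section Field

variable {K : Type*} [Field K] [NeZero (2 : K)] {x y : ℕ → K}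

theorem add_eq (h : IsTraceRecursion x y) (n : ℕ) :
    x n + y n = (1 / 2) ^ n * (x 0 + y 0) := by
  rw [← h.two_pow_mul_add n, ← mul_assoc, ← mul_pow, one_div_mul_cancel two_ne_zero, one_pow,
    one_mul]

variable [NeZero (3 : K)]

theorem fst_eq (h : IsTraceRecursion x y) (n : ℕ) :
    x n = (1 / 3) * ((x 0 + y 0) * (1 / 2) ^ n + (2 * x 0 - y 0) * (-1) ^ n) := by
  have h3 : (3 : K) ≠ 0 := three_ne_zero
  calc x n = (1 / 3) * ((x n + y n) - (y n - 2 * x n)) := by field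
    _ = _ := by rw [h.add_eq n, h.sub_two_mul n]; ring

theorem snd_eq (h : IsTraceRecursion x y) (n : ℕ) :
    y n = (1 / 3) * (2 * (x 0 + y 0) * (1 / 2) ^ n - (2 * x 0 - y 0) * (-1) ^ n) := by
  have h3 : (3 : K) ≠ 0 := three_ne_zero
  calc y n = (1 / 3) * (2 * (x n + y n) + (y n - 2 * x n)) := by field
    _ = _ := by rw [h.add_eq n, h.sub_two_mul n]; ring

end Field

section Order

variable {R : Type*} [CommRing R] [LinearOrder R] [IsStrictOrderedRing R] {x y : ℕ → R}

theorem two_pow_mul_abs_sub_le_of_nonneg (h : IsTraceRecursion x y) (hx : ∀ n, 0 ≤ x n) (n : ℕ) :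
    2 ^ n * |y 0 - 2 * x 0| ≤ 2 * (x 0 + y 0) := by
  have hy : 0 ≤ y n := by
    rw [h.eq_two_mul_succ_add n]
    exact add_nonneg (mul_nonneg zero_le_two (hx (n + 1))) (hx n)
  have habs : |y n - 2 * x n| ≤ 2 * (x n + y n) :=
    abs_le.mpr ⟨by linarith, by linarith [hx n]⟩
  calc 2 ^ n * |y 0 - 2 * x 0|
      = 2 ^ n * |y n - 2 * x n| := by rw [h.sub_two_mul n, abs_mul, abs_neg_one_pow, one_mul]
    _ ≤ 2 ^ n * (2 * (x n + y n)) := by gcongr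
    _ = 2 * (x 0 + y 0) := by rw [mul_left_comm, h.two_pow_mul_add n]

theorem snd_zero_eq_two_mul_of_nonneg [Archimedean R] (h : IsTraceRecursion x y)
    (hx : ∀ n, 0 ≤ x n) : y 0 = 2 * x 0 :=
  sub_eq_zero.mp <| abs_nonpos_iff.mp <|
    nonpos_of_forall_pow_mul_le one_lt_two (h.two_pow_mul_abs_sub_le_of_nonneg hx)

end Order

end IsTraceRecursion

theorem trace_recursion_solution_general {K : Type*} [Field K] [LinearOrder K]
    [IsStrictOrderedRing K] [Archimedean K] {t : K} {x y : ℕ → K}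
    (h : IsTraceRecursion x y) (hx0 : x 0 = t) (hy0 : y 0 = 1 / 2 - t) :
    (∀ n : ℕ,
      x n = (1 / 3) * ((1 / 2) ^ (n + 1) + (3 * t - 1 / 2) * (-1) ^ n) ∧
      y n = (1 / 3) * ((1 / 2) ^ n - (3 * t - 1 / 2) * (-1) ^ n)) ∧
    ((∀ n : ℕ, 0 ≤ x n) →
      t = 1 / 6 ∧ ∀ n : ℕ, x n = 1 / (6 * 2 ^ n) ∧ y n = 1 / (3 * 2 ^ n)) := by
  have closed_form (n : ℕ) :
      x n = (1 / 3) * ((1 / 2) ^ (n + 1) + (3 * t - 1 / 2) * (-1) ^ n) ∧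
      y n = (1 / 3) * ((1 / 2) ^ n - (3 * t - 1 / 2) * (-1) ^ n) := by
    rw [h.fst_eq n, h.snd_eq n, hx0, hy0]
    constructor <;> ring
  refine ⟨closed_form, fun hx => ?_⟩
  have ht : t = 1 / 6 := by
    have := h.snd_zero_eq_two_mul_of_nonneg hx
    rw [hx0, hy0] at this
    linarith
  refine ⟨ht, fun n => ?_⟩
  rw [(closed_form n).1, (closed_form n).2, ht]
  simp only [one_div_pow]
  constructor <;> ring

/-- Explicit solution of the recursion `x₀ = t`, `y₀ = 1/2 − t`, `xₙ = yₙ₊₁`,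
`yₙ = 2xₙ₊₁ + xₙ`, and the consequence of strict positivity: `t = 1/6`,
`xₙ = 1/(6·2ⁿ)`, `yₙ = 1/(3·2ⁿ)`. -/
theorem trace_recursion_solution (t : ℝ) (x y : ℕ → ℝ)
    (hx0 : x 0 = t) (hy0 : y 0 = 1 / 2 - t)
    (hxy : ∀ n : ℕ, x n = y (n + 1))
    (hyx : ∀ n : ℕ, y n = 2 * x (n + 1) + x n) :
    (∀ n : ℕ,
      x n = (1 / 3) * ((1 / 2) ^ (n + 1) + (3 * t - 1 / 2) * (-1 : ℝ) ^ n) ∧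
      y n = (1 / 3) * ((1 / 2) ^ n - (3 * t - 1 / 2) * (-1 : ℝ) ^ n)) ∧
    ((∀ n : ℕ, 0 < x n ∧ 0 < y n) →
      t = 1 / 6 ∧ ∀ n : ℕ, x n = 1 / (6 * 2 ^ n) ∧ y n = 1 / (3 * 2 ^ n)) :=
  (trace_recursion_solution_general ⟨hxy, hyx⟩ hx0 hy0).imp_right
    fun solve hpos => solve fun n => (hpos n).1.le
end
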